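/- For every constant C > 0 there exist a constant C' > 0 and a time t₀ ≥ 1 such that the following holds. For all t ≥ t₀, all T with 0 < T ≤ 1, all x ≥ 0 and all ξ = (ξ₁,ξ₂,ξ₃) ∈ ℝ³ with x − T(ξ₁+u) ≥ 0, ∫_{t−T}^{t} e^{−ν(ξ)(t−s)/2} · ( ∫_{ℝ³} e^{−C|ξ−ξ'|²}/|ξ−ξ'| · α(x−(t−s)(ξ₁+u), ξ')⁻¹ dξ' ) ds ≤ C' · (√T + T·ln t) / α(x,ξ). -/

import Mathlib

/-!
The singularity of the kernel is shared between the two velocity directions orthogonal to the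
first, `|v| ≥ √|v₂| √|v₃|`, and that of the weight between velocity and position,
`α̃(y, ξ') ≥ √|ξ'₁ + u| √(cν₀ y)`. Each coordinate of the velocity integral then carries a Gaussian
times an integrable inverse square root, so the velocity integral is at most a constant times
`1 + (cν₀ y)^(-1/2)`.

Along the backward characteristic `y = x - τ(ξ₁ + u)` with `0 ≤ τ ≤ T ≤ 1`, the position `y`
dominates a multiple of `min τ (T - τ) * α̃(x, ξ)`. As `α ≲ √α̃`, this trades `y^(-1/2)` for
`min τ (T - τ)^(-1/2) / α(x, ξ)`, and the time integral of the inverse square root is of order `√T`.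

If `α̃(x, ξ) = 0` the characteristic stays at position `0`, where the velocity integrand is not
integrable: both sides of the inequality are then `0` by the conventions for the Bochner integral
and for division by zero.
-/

open MeasureTheory

noncomputable section

/-- The kinetic weight `α̃(x,ξ) = √((ξ₁+u)² + (cν₀)² x²)`. -/
def alphaTilde (u c ν₀ : ℝ) (x : ℝ) (ξ : EuclideanSpace ℝ (Fin 3)) : ℝ :=
  Real.sqrt ((ξ 0 + u) ^ 2 + (c * ν₀) ^ 2 * x ^ 2)

section InverseSquareRoot

lemma sqrt_mul_sqrt_le {a b r : ℝ} (hr : 0 ≤ r) (ha : a ≤ r) (hb : b ≤ r) :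
    √a * √b ≤ r :=
  calc √a * √b ≤ √r * √r := by gcongr
    _ = r := Real.mul_self_sqrt hr

lemma inv_sqrt_eq_rpow {x : ℝ} (hx : 0 ≤ x) : (√x)⁻¹ = x ^ (-(1 / 2) : ℝ) := by
  rw [Real.sqrt_eq_rpow, Real.rpow_neg hx]

lemma intervalIntegrable_inv_sqrt {b : ℝ} (hb : 0 ≤ b) :
    IntervalIntegrable (fun s : ℝ => (√s)⁻¹) volume 0 b := by
  refine IntervalIntegrable.congr (fun s hs => ?_)
    (intervalIntegral.intervalIntegrable_rpow' (r := -(1 / 2)) (by norm_num))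
  rw [Set.uIoc_of_le hb] at hs
  exact (inv_sqrt_eq_rpow hs.1.le).symm

lemma integral_inv_sqrt {b : ℝ} (hb : 0 ≤ b) : ∫ s in (0 : ℝ)..b, (√s)⁻¹ = 2 * √b := by
  have hcongr : ∫ s in (0 : ℝ)..b, (√s)⁻¹ = ∫ s in (0 : ℝ)..b, s ^ (-(1 / 2) : ℝ) := by
    refine intervalIntegral.integral_congr fun s hs => ?_
    rw [Set.uIcc_of_le hb] at hs
    exact inv_sqrt_eq_rpow hs.1
  rw [hcongr, integral_rpow (Or.inl (by norm_num)), Real.sqrt_eq_rpow]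
  norm_num
  ring

lemma integrableOn_inv_sqrt_endpoints {a b : ℝ} (hab : a ≤ b) :
    IntegrableOn (fun s => (√(b - s))⁻¹ + (√(s - a))⁻¹) (Set.Ioo a b) := by
  have h := intervalIntegrable_inv_sqrt (sub_nonneg.2 hab)
  rw [← intervalIntegrable_iff_integrableOn_Ioo_of_le hab]
  exact (by simpa using (h.comp_sub_left b).symm : IntervalIntegrable _ _ _ _).add
    (by simpa using h.comp_sub_right a)

lemma setIntegral_inv_sqrt_endpoints {a b : ℝ} (hab : a ≤ b) :
    ∫ s in Set.Ioo a b, ((√(b - s))⁻¹ + (√(s - a))⁻¹) = 4 * √(b - a) := by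
  have h := intervalIntegrable_inv_sqrt (sub_nonneg.2 hab)
  rw [← integral_Ioc_eq_integral_Ioo, ← intervalIntegral.integral_of_le hab,
    intervalIntegral.integral_add (by simpa using (h.comp_sub_left b).symm)
      (by simpa using h.comp_sub_right a),
    intervalIntegral.integral_comp_sub_left (fun s => (√s)⁻¹),
    intervalIntegral.integral_comp_sub_right (fun s => (√s)⁻¹), sub_self, sub_self,
    integral_inv_sqrt (sub_nonneg.2 hab)]
  ring

lemma integral_indicator_inv_sqrt_abs :
    ∫ p : ℝ, (Set.Iic 1).indicator (fun r => (√r)⁻¹) |p| = 4 := by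
  rw [integral_comp_abs, setIntegral_indicator measurableSet_Iic, Set.Ioi_inter_Iic,
    ← intervalIntegral.integral_of_le zero_le_one, integral_inv_sqrt zero_le_one]
  norm_num

lemma integrable_indicator_inv_sqrt_abs :
    Integrable fun p : ℝ => (Set.Iic 1).indicator (fun r => (√r)⁻¹) |p| :=
  Integrable.of_integral_ne_zero (by rw [integral_indicator_inv_sqrt_abs]; norm_num)

lemma inv_sqrt_le_one_add_indicator (r : ℝ) :
    (√r)⁻¹ ≤ 1 + (Set.Iic 1).indicator (fun r => (√r)⁻¹) r := by
  rcases le_or_gt r 1 with hr | hr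
  · rw [Set.indicator_of_mem (Set.mem_Iic.2 hr)]
    linarith
  · rw [Set.indicator_of_notMem (by simpa using hr), add_zero]
    exact inv_le_one_of_one_le₀ (Real.one_le_sqrt.2 hr.le)

end InverseSquareRoot

section SingularGaussian

/-- The Gaussian centred at `a` times `1 + |p - b|^(-1/2)`: the one-dimensional factors into which
the velocity integrand is split. -/
def singularGaussian (C a b p : ℝ) : ℝ :=
  Real.exp (-C * (a - p) ^ 2) * (1 + (√|p - b|)⁻¹)

/-- A majorant of `singularGaussian`, in which cutting off the singularity at distance `1` from `b`
decouples it from the Gaussian, so that its integral does not depend on `a` and `b`. -/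
def singularGaussianMajorant (C a b p : ℝ) : ℝ :=
  2 * Real.exp (-C * (a - p) ^ 2) + (Set.Iic 1).indicator (fun r => (√r)⁻¹) |p - b|

variable {C : ℝ}

lemma singularGaussian_nonneg (C a b p : ℝ) : 0 ≤ singularGaussian C a b p := by
  unfold singularGaussian
  positivity

lemma singularGaussian_le_majorant (hC : 0 < C) (a b p : ℝ) :
    singularGaussian C a b p ≤ singularGaussianMajorant C a b p := by
  have hexp : Real.exp (-C * (a - p) ^ 2) ≤ 1 :=
    Real.exp_le_one_iff.2 (by nlinarith [sq_nonneg (a - p)])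
  have hind : 0 ≤ (Set.Iic 1).indicator (fun r => (√r)⁻¹) |p - b| :=
    Set.indicator_nonneg (fun _ _ => by positivity) _
  calc singularGaussian C a b p
      ≤ Real.exp (-C * (a - p) ^ 2) *
          (1 + (1 + (Set.Iic 1).indicator (fun r => (√r)⁻¹) |p - b|)) := by
        unfold singularGaussian
        gcongr
        exact inv_sqrt_le_one_add_indicator _
    _ = 2 * Real.exp (-C * (a - p) ^ 2) +
          Real.exp (-C * (a - p) ^ 2) * (Set.Iic 1).indicator (fun r => (√r)⁻¹) |p - b| := by
        ring
    _ ≤ singularGaussianMajorant C a b p := by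
        unfold singularGaussianMajorant
        gcongr
        exact mul_le_of_le_one_left hind hexp

lemma integrable_singularGaussianMajorant (hC : 0 < C) (a b : ℝ) :
    Integrable (singularGaussianMajorant C a b) :=
  (((integrable_exp_neg_mul_sq hC).comp_sub_left a).const_mul 2).add
    (integrable_indicator_inv_sqrt_abs.comp_sub_right b)

lemma integral_singularGaussianMajorant (hC : 0 < C) (a b : ℝ) :
    ∫ p, singularGaussianMajorant C a b p = 2 * √(Real.pi / C) + 4 := by
  unfold singularGaussianMajorant
  rw [integral_add (((integrable_exp_neg_mul_sq hC).comp_sub_left a).const_mul 2)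
      (integrable_indicator_inv_sqrt_abs.comp_sub_right b), integral_const_mul,
    integral_sub_left_eq_self (fun p : ℝ => Real.exp (-C * p ^ 2)) volume a, integral_gaussian,
    integral_sub_right_eq_self (fun p : ℝ => (Set.Iic 1).indicator (fun r => (√r)⁻¹) |p|) b,
    integral_indicator_inv_sqrt_abs]

lemma integrable_singularGaussian (hC : 0 < C) (a b : ℝ) :
    Integrable (singularGaussian C a b) := by
  refine (integrable_singularGaussianMajorant hC a b).mono' ?_ (.of_forall fun p => ?_)
  · unfold singularGaussian
    fun_prop
  · rw [Real.norm_of_nonneg (singularGaussian_nonneg C a b p)]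
    exact singularGaussian_le_majorant hC a b p

lemma integral_singularGaussian_le (hC : 0 < C) (a b : ℝ) :
    ∫ p, singularGaussian C a b p ≤ 2 * √(Real.pi / C) + 4 := by
  rw [← integral_singularGaussianMajorant hC a b]
  exact integral_mono (integrable_singularGaussian hC a b)
    (integrable_singularGaussianMajorant hC a b) (singularGaussian_le_majorant hC a b)

end SingularGaussian

section EuclideanSpace

variable {ι : Type*} [Fintype ι]

lemma integrable_euclideanSpace_prod {f : ι → ℝ → ℝ} (hf : ∀ i, Integrable (f i)) :
    Integrable fun v : EuclideanSpace ℝ ι => ∏ i, f i (v i) := by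
  rw [← (PiLp.volume_preserving_toLp ι).integrable_comp_emb
    (MeasurableEquiv.toLp 2 _).measurableEmbedding]
  exact Integrable.fintype_prod hf

lemma integral_euclideanSpace_prod (f : ι → ℝ → ℝ) :
    ∫ v : EuclideanSpace ℝ ι, ∏ i, f i (v i) = ∏ i, ∫ p, f i p := by
  rw [← (PiLp.volume_preserving_toLp ι).integral_comp
    (MeasurableEquiv.toLp 2 _).measurableEmbedding]
  exact integral_fintype_prod_volume_eq_prod f

lemma ae_euclideanSpace_apply_ne (i : ι) (a : ℝ) : ∀ᵐ v : EuclideanSpace ℝ ι, v i ≠ a :=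
  (PiLp.volume_preserving_ofLp ι).quasiMeasurePreserving.ae
    (Measure.ae_eval_ne (μ := fun _ : ι => (volume : Measure ℝ)) i a)

lemma ae_integrable_euclideanSpace_insertNth {n : ℕ} {E : Type*} [NormedAddCommGroup E]
    {f : EuclideanSpace ℝ (Fin (n + 1)) → E} (hf : Integrable f) (i : Fin (n + 1)) :
    ∀ᵐ z : Fin n → ℝ, Integrable fun r : ℝ => f (WithLp.toLp 2 (i.insertNth r z)) := by
  rw [← (PiLp.volume_preserving_toLp (Fin (n + 1))).integrable_comp_emb
      (MeasurableEquiv.toLp 2 _).measurableEmbedding,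
    ← ((volume_preserving_piFinSuccAbove (fun _ => ℝ) i).symm).integrable_comp_emb
      (MeasurableEquiv.measurableEmbedding _)] at hf
  exact hf.prod_left_ae

lemma exp_neg_mul_norm_sq (C : ℝ) (v : EuclideanSpace ℝ ι) :
    Real.exp (-C * ‖v‖ ^ 2) = ∏ i, Real.exp (-C * v i ^ 2) := by
  rw [EuclideanSpace.real_norm_sq_eq, Finset.mul_sum, Real.exp_sum]

lemma inv_norm_le_inv_sqrt_mul_inv_sqrt {v : EuclideanSpace ℝ ι} {i j : ι}
    (hi : v i ≠ 0) (hj : v j ≠ 0) : ‖v‖⁻¹ ≤ (√|v i|)⁻¹ * (√|v j|)⁻¹ := by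
  rw [← mul_inv]
  exact inv_anti₀ (by positivity)
    (sqrt_mul_sqrt_le (norm_nonneg v) (PiLp.norm_apply_le v i) (PiLp.norm_apply_le v j))

end EuclideanSpace

/-- `χ` is comparable on `[0, ∞)`, up to the factor `L`, to the truncation `s ↦ min s 1`. -/
structure IsTruncation (L : ℝ) (χ : ℝ → ℝ) : Prop where
  pos : 0 < L
  min_le_mul : ∀ s, 0 ≤ s → min s 1 ≤ L * χ s
  le_mul_min : ∀ s, 0 ≤ s → χ s ≤ L * min s 1

namespace IsTruncation

variable {L s : ℝ} {χ : ℝ → ℝ}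

lemma of_monotoneOn (hmono : MonotoneOn χ (Set.Ici 0))
    (hid : ∀ s : ℝ, 0 ≤ s → s ≤ 1 / 2 → χ s = s) (hone : ∀ s : ℝ, 2 ≤ s → χ s = 1) :
    IsTruncation 2 χ := by
  have half_le {s : ℝ} (hs : 1 / 2 ≤ s) : 1 / 2 ≤ χ s := by
    rw [← hid (1 / 2) (by norm_num) le_rfl]
    exact hmono (Set.mem_Ici.2 (by norm_num)) (Set.mem_Ici.2 (by linarith)) hs
  have le_one {s : ℝ} (hs : 0 ≤ s) : χ s ≤ 1 := by
    rw [← hone (max s 2) (le_max_right s 2)]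
    exact hmono hs (hs.trans (le_max_left s 2)) (le_max_left s 2)
  refine ⟨two_pos, fun s hs => ?_, fun s hs => ?_⟩ <;> rcases le_total s (1 / 2) with h | h
  · rw [hid s hs h]
    linarith [min_le_left s 1]
  · linarith [min_le_right s 1, half_le h]
  · rw [hid s hs h, min_eq_left (by linarith)]
    linarith
  · linarith [le_one hs, le_min h (by norm_num : (1 / 2 : ℝ) ≤ 1)]

lemma nonneg (hχ : IsTruncation L χ) (hs : 0 ≤ s) : 0 ≤ χ s :=
  nonneg_of_mul_nonneg_right ((le_min hs zero_le_one).trans (hχ.min_le_mul s hs)) hχ.pos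

lemma apply_pos (hχ : IsTruncation L χ) (hs : 0 < s) : 0 < χ s :=
  pos_of_mul_pos_right ((lt_min hs one_pos).trans_le (hχ.min_le_mul s hs.le)) hχ.pos.le

lemma apply_zero (hχ : IsTruncation L χ) : χ 0 = 0 :=
  le_antisymm (by simpa using hχ.le_mul_min 0 le_rfl) (hχ.nonneg le_rfl)

lemma le_const (hχ : IsTruncation L χ) (hs : 0 ≤ s) : χ s ≤ L :=
  (hχ.le_mul_min s hs).trans (mul_le_of_le_one_right hχ.pos.le (min_le_right s 1))

lemma le_mul (hχ : IsTruncation L χ) (hs : 0 ≤ s) : χ s ≤ L * s :=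
  (hχ.le_mul_min s hs).trans (mul_le_mul_of_nonneg_left (min_le_left s 1) hχ.pos.le)

lemma le_mul_sqrt (hχ : IsTruncation L χ) (hs : 0 ≤ s) : χ s ≤ L * √s := by
  refine (hχ.le_mul_min s hs).trans (mul_le_mul_of_nonneg_left (Real.le_sqrt_of_sq_le ?_) hχ.pos.le)
  nlinarith [min_le_left s 1, min_le_right s 1, le_min hs zero_le_one]

lemma inv_le (hχ : IsTruncation L χ) (hs : 0 < s) : (χ s)⁻¹ ≤ L * (1 + s⁻¹) := by
  have hmin : 1 ≤ (1 + s⁻¹) * min s 1 := by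
    rcases min_choice s 1 with h | h <;> rw [h]
    · rw [add_mul, inv_mul_cancel₀ hs.ne']
      linarith
    · linarith [inv_pos.2 hs]
  rw [inv_le_iff_one_le_mul₀ (hχ.apply_pos hs)]
  calc 1 ≤ (1 + s⁻¹) * min s 1 := hmin
    _ ≤ (1 + s⁻¹) * (L * χ s) := by gcongr; exact hχ.min_le_mul s hs.le
    _ = L * (1 + s⁻¹) * χ s := by ring

lemma one_add_inv_sqrt_le (hχ : IsTruncation L χ) {θ D p : ℝ} (hs : 0 < s) (hθ : 0 < θ)
    (hp : 0 < p) (h : θ * s ≤ D * p) :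
    1 + (√p)⁻¹ ≤ L * (1 + √D * (√θ)⁻¹) / χ s := by
  have hsqrt : √s * (√p)⁻¹ ≤ √D * (√θ)⁻¹ := by
    rw [← div_eq_mul_inv, ← div_eq_mul_inv, div_le_div_iff₀ (by positivity) (by positivity),
      ← Real.sqrt_mul hs.le, ← Real.sqrt_mul' D hp.le]
    exact Real.sqrt_le_sqrt (by linarith)
  have hL := hχ.pos
  rw [le_div_iff₀ (hχ.apply_pos hs)]
  calc (1 + (√p)⁻¹) * χ s = χ s + χ s * (√p)⁻¹ := by ring
    _ ≤ L + L * √s * (√p)⁻¹ := by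
      gcongr
      exacts [hχ.le_const hs.le, hχ.le_mul_sqrt hs.le]
    _ = L * (1 + √s * (√p)⁻¹) := by ring
    _ ≤ L * (1 + √D * (√θ)⁻¹) := by gcongr

end IsTruncation

section KineticWeight

variable {u c ν₀ x : ℝ} {ξ : EuclideanSpace ℝ (Fin 3)}

lemma alphaTilde_nonneg (u c ν₀ x : ℝ) (ξ : EuclideanSpace ℝ (Fin 3)) :
    0 ≤ alphaTilde u c ν₀ x ξ :=
  Real.sqrt_nonneg _

lemma alphaTilde_zero_left (u c ν₀ : ℝ) (ξ : EuclideanSpace ℝ (Fin 3)) :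
    alphaTilde u c ν₀ 0 ξ = |ξ 0 + u| := by
  simp [alphaTilde, Real.sqrt_sq_eq_abs]

lemma alphaTilde_eq_zero_iff (hκ : c * ν₀ ≠ 0) :
    alphaTilde u c ν₀ x ξ = 0 ↔ ξ 0 + u = 0 ∧ x = 0 := by
  rw [alphaTilde, Real.sqrt_eq_zero (by positivity),
    add_eq_zero_iff_of_nonneg (by positivity) (by positivity)]
  simp [hκ]

lemma sqrt_mul_sqrt_le_alphaTilde (u c ν₀ x : ℝ) (ξ : EuclideanSpace ℝ (Fin 3)) :
    √|ξ 0 + u| * √(c * ν₀ * x) ≤ alphaTilde u c ν₀ x ξ :=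
  sqrt_mul_sqrt_le (alphaTilde_nonneg u c ν₀ x ξ)
    (Real.abs_le_sqrt (le_add_of_nonneg_right (by positivity)))
    (Real.le_sqrt_of_sq_le (by nlinarith [sq_nonneg (ξ 0 + u)]))

lemma alphaTilde_le (hκ : 0 ≤ c * ν₀) (hx : 0 ≤ x) :
    alphaTilde u c ν₀ x ξ ≤ (1 + c * ν₀) * (x + |ξ 0 + u|) := by
  have hw := abs_nonneg (ξ 0 + u)
  calc alphaTilde u c ν₀ x ξ ≤ |ξ 0 + u| + c * ν₀ * x := by
        refine Real.sqrt_le_iff.2 ⟨by positivity, ?_⟩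
        rw [← sq_abs (ξ 0 + u)]
        nlinarith [mul_nonneg hw (mul_nonneg hκ hx)]
    _ ≤ (1 + c * ν₀) * (x + |ξ 0 + u|) := by nlinarith [mul_nonneg hκ hw]

lemma min_mul_add_abs_le {w T τ : ℝ} (hx : 0 ≤ x) (hT : T ≤ 1) (hτ : 0 ≤ τ) (hτT : τ ≤ T)
    (hxT : 0 ≤ x - T * w) : min τ (T - τ) * (x + |w|) ≤ 2 * (x - τ * w) := by
  have hxw : 0 ≤ x + |w| := by positivity
  rcases le_total w 0 with hw | hw
  · calc min τ (T - τ) * (x + |w|) ≤ τ * (x + |w|) :=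
        mul_le_mul_of_nonneg_right (min_le_left _ _) hxw
      _ ≤ 2 * (x - τ * w) := by
        rw [abs_of_nonpos hw]
        nlinarith [mul_nonneg hτ (neg_nonneg.2 hw)]
  · have hwx : (T - τ) * w ≤ x - τ * w := by linarith
    have hxx : (T - τ) * x ≤ x - τ * w := by
      rcases hτ.eq_or_lt with rfl | hτ
      · nlinarith
      · refine le_of_mul_le_mul_left ?_ (hτ.trans_le hτT)
        calc T * ((T - τ) * x) ≤ (T - τ) * x :=
              mul_le_of_le_one_left (mul_nonneg (sub_nonneg.2 hτT) hx) hT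
          _ = T * x - τ * x := by ring
          _ ≤ T * x - τ * (T * w) := by gcongr; linarith
          _ = T * (x - τ * w) := by ring
    calc min τ (T - τ) * (x + |w|) ≤ (T - τ) * (x + |w|) :=
        mul_le_mul_of_nonneg_right (min_le_right _ _) hxw
      _ ≤ 2 * (x - τ * w) := by rw [abs_of_nonneg hw]; linarith

lemma min_mul_alphaTilde_le {T τ : ℝ} (hκ : 0 ≤ c * ν₀) (hx : 0 ≤ x) (hT : T ≤ 1) (hτ : 0 ≤ τ)
    (hτT : τ ≤ T) (hxT : 0 ≤ x - T * (ξ 0 + u)) :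
    min τ (T - τ) * alphaTilde u c ν₀ x ξ ≤ 2 * (1 + c * ν₀) * (x - τ * (ξ 0 + u)) := by
  have hmin : 0 ≤ min τ (T - τ) := le_min hτ (sub_nonneg.2 hτT)
  calc min τ (T - τ) * alphaTilde u c ν₀ x ξ
      ≤ min τ (T - τ) * ((1 + c * ν₀) * (x + |ξ 0 + u|)) :=
        mul_le_mul_of_nonneg_left (alphaTilde_le hκ hx) hmin
    _ = (1 + c * ν₀) * (min τ (T - τ) * (x + |ξ 0 + u|)) := by ring
    _ ≤ (1 + c * ν₀) * (2 * (x - τ * (ξ 0 + u))) :=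
      mul_le_mul_of_nonneg_left (min_mul_add_abs_le hx hT hτ hτT hxT) (by positivity)
    _ = 2 * (1 + c * ν₀) * (x - τ * (ξ 0 + u)) := by ring

end KineticWeight

section VelocityIntegral

/-- The velocity integrand `e^{-C|ξ-ξ'|²}/|ξ-ξ'| · α(y,ξ')⁻¹`, where `α = χ ∘ α̃`. -/
def velocityIntegrand (C u c ν₀ : ℝ) (χ : ℝ → ℝ) (y : ℝ) (ξ ξ' : EuclideanSpace ℝ (Fin 3)) : ℝ :=
  Real.exp (-C * ‖ξ - ξ'‖ ^ 2) / ‖ξ - ξ'‖ * (χ (alphaTilde u c ν₀ y ξ'))⁻¹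

variable {C u c ν₀ L y : ℝ} {χ : ℝ → ℝ} {ξ ξ' : EuclideanSpace ℝ (Fin 3)}

lemma velocityIntegrand_nonneg (hχ : IsTruncation L χ) (C u c ν₀ y : ℝ)
    (ξ ξ' : EuclideanSpace ℝ (Fin 3)) : 0 ≤ velocityIntegrand C u c ν₀ χ y ξ ξ' := by
  have := hχ.nonneg (alphaTilde_nonneg u c ν₀ y ξ')
  unfold velocityIntegrand
  positivity

lemma exp_neg_mul_norm_sq_div_norm_le (C : ℝ) (h₁ : ξ' 1 ≠ ξ 1) (h₂ : ξ' 2 ≠ ξ 2) :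
    Real.exp (-C * ‖ξ - ξ'‖ ^ 2) / ‖ξ - ξ'‖ ≤
      (∏ i, Real.exp (-C * (ξ i - ξ' i) ^ 2)) * ((√|ξ' 1 - ξ 1|)⁻¹ * (√|ξ' 2 - ξ 2|)⁻¹) := by
  rw [div_eq_mul_inv, exp_neg_mul_norm_sq, norm_sub_rev]
  exact mul_le_mul_of_nonneg_left (inv_norm_le_inv_sqrt_mul_inv_sqrt (v := ξ' - ξ)
    (sub_ne_zero.2 h₁) (sub_ne_zero.2 h₂)) (by positivity)

lemma inv_apply_alphaTilde_le (hχ : IsTruncation L χ) (hy : 0 < c * ν₀ * y) (hξ : ξ 0 ≠ -u) :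
    (χ (alphaTilde u c ν₀ y ξ))⁻¹ ≤ L * (1 + (√|ξ 0 - -u|)⁻¹ * (√(c * ν₀ * y))⁻¹) := by
  have hu : 0 < |ξ 0 + u| := abs_pos.2 fun h => hξ (by linarith)
  have hL := hχ.pos
  have hle := sqrt_mul_sqrt_le_alphaTilde u c ν₀ y ξ
  rw [sub_neg_eq_add, ← mul_inv]
  refine (hχ.inv_le (lt_of_lt_of_le (by positivity) hle)).trans ?_
  gcongr

lemma velocityIntegrand_le (hχ : IsTruncation L χ) (hy : 0 < c * ν₀ * y)
    (h₀ : ξ' 0 ≠ -u) (h₁ : ξ' 1 ≠ ξ 1) (h₂ : ξ' 2 ≠ ξ 2) :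
    velocityIntegrand C u c ν₀ χ y ξ ξ' ≤
      (∏ i, singularGaussian C (ξ i) (![-u, ξ 1, ξ 2] i) (ξ' i)) *
        (L * (1 + (√(c * ν₀ * y))⁻¹)) := by
  have hL := hχ.pos
  have hχ_nonneg := hχ.nonneg (alphaTilde_nonneg u c ν₀ y ξ')
  set q := (√(c * ν₀ * y))⁻¹
  set s₀ := (√|ξ' 0 - -u|)⁻¹ with hs₀
  set s₁ := (√|ξ' 1 - ξ 1|)⁻¹ with hs₁
  set s₂ := (√|ξ' 2 - ξ 2|)⁻¹ with hs₂
  have hs₀_nonneg : 0 ≤ s₀ := by positivity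
  have hs₁_nonneg : 0 ≤ s₁ := by positivity
  have hs₂_nonneg : 0 ≤ s₂ := by positivity
  have hq : 0 ≤ q := by positivity
  have hweight : 1 + s₀ * q ≤ (1 + s₀) * (1 + q) := by nlinarith [hs₀_nonneg, hq]
  have hkernel : s₁ * s₂ ≤ (1 + s₁) * (1 + s₂) := by nlinarith [hs₁_nonneg, hs₂_nonneg]
  calc velocityIntegrand C u c ν₀ χ y ξ ξ'
      ≤ ((∏ i, Real.exp (-C * (ξ i - ξ' i) ^ 2)) * (s₁ * s₂)) * (L * (1 + s₀ * q)) :=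
        mul_le_mul (exp_neg_mul_norm_sq_div_norm_le C h₁ h₂) (inv_apply_alphaTilde_le hχ hy h₀)
          (by positivity) (by positivity)
    _ ≤ ((∏ i, Real.exp (-C * (ξ i - ξ' i) ^ 2)) * ((1 + s₁) * (1 + s₂))) *
          (L * ((1 + s₀) * (1 + q))) := by
        gcongr
    _ = (∏ i, singularGaussian C (ξ i) (![-u, ξ 1, ξ 2] i) (ξ' i)) * (L * (1 + q)) := by
        simp only [singularGaussian, Fin.prod_univ_three, Matrix.cons_val, ← hs₀, ← hs₁, ← hs₂]
        ring

lemma integral_velocityIntegrand_le (hC : 0 < C) (hχ : IsTruncation L χ) (hy : 0 < c * ν₀ * y)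
    (ξ : EuclideanSpace ℝ (Fin 3)) :
    ∫ ξ', velocityIntegrand C u c ν₀ χ y ξ ξ' ≤
      (2 * √(Real.pi / C) + 4) ^ 3 * (L * (1 + (√(c * ν₀ * y))⁻¹)) := by
  have hL := hχ.pos
  let f (i : Fin 3) : ℝ → ℝ := singularGaussian C (ξ i) (![-u, ξ 1, ξ 2] i)
  have hf : Integrable fun ξ' : EuclideanSpace ℝ (Fin 3) => ∏ i, f i (ξ' i) :=
    integrable_euclideanSpace_prod fun i => integrable_singularGaussian hC _ _
  calc ∫ ξ', velocityIntegrand C u c ν₀ χ y ξ ξ'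
      ≤ ∫ ξ' : EuclideanSpace ℝ (Fin 3), (∏ i, f i (ξ' i)) * (L * (1 + (√(c * ν₀ * y))⁻¹)) := by
        refine integral_mono_of_nonneg (.of_forall (velocityIntegrand_nonneg hχ C u c ν₀ y ξ))
          (hf.mul_const _) ?_
        filter_upwards [ae_euclideanSpace_apply_ne 0 (-u), ae_euclideanSpace_apply_ne 1 (ξ 1),
          ae_euclideanSpace_apply_ne 2 (ξ 2)] with ξ' h₀ h₁ h₂
        exact velocityIntegrand_le hχ hy h₀ h₁ h₂
    _ = (∏ i, ∫ p, f i p) * (L * (1 + (√(c * ν₀ * y))⁻¹)) := by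
        rw [integral_mul_const, integral_euclideanSpace_prod]
    _ ≤ (2 * √(Real.pi / C) + 4) ^ 3 * (L * (1 + (√(c * ν₀ * y))⁻¹)) := by
        gcongr
        simpa using Finset.prod_le_prod (s := Finset.univ)
          (fun i _ => integral_nonneg (singularGaussian_nonneg C _ _))
          (fun i _ => integral_singularGaussian_le hC (ξ i) (![-u, ξ 1, ξ 2] i))

open Asymptotics Filter Topology in
lemma inv_isBigO_velocityIntegrand (hχ : IsTruncation L χ) (C u c ν₀ : ℝ)
    (ξ : EuclideanSpace ℝ (Fin 3)) (z : Fin 2 → ℝ) :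
    (fun r => (r - -u)⁻¹) =O[𝓝[≠] (-u)]
      fun r => velocityIntegrand C u c ν₀ χ 0 ξ (WithLp.toLp 2 (Fin.insertNth 0 r z)) := by
  let v (r : ℝ) : EuclideanSpace ℝ (Fin 3) := WithLp.toLp 2 (Fin.insertNth 0 r z)
  let k (r : ℝ) : ℝ := Real.exp (C * ‖ξ - v r‖ ^ 2) * ‖ξ - v r‖
  have hv_zero (r : ℝ) : v r 0 = r := Fin.insertNth_apply_same (α := fun _ => ℝ) 0 r z
  have hv : Continuous v :=
    (PiLp.continuous_toLp 2 _).comp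
      (Continuous.finInsertNth (A := fun _ => ℝ) 0 continuous_id continuous_const)
  have hk : k =O[𝓝[≠] (-u)] fun _ => (1 : ℝ) :=
    ((by fun_prop : Continuous k).continuousAt.isBigO_one ℝ).mono nhdsWithin_le_nhds
  have hξ : ∀ᶠ r in 𝓝[≠] (-u), r ≠ ξ 0 := by
    rcases eq_or_ne (-u) (ξ 0) with h | h
    · exact h ▸ self_mem_nhdsWithin
    · exact eventually_ne_nhdsWithin h
  have hinv : (fun r => (r - -u)⁻¹) =O[𝓝[≠] (-u)]
      fun r => k r * velocityIntegrand C u c ν₀ χ 0 ξ (v r) := by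
    refine IsBigO.of_bound L ?_
    filter_upwards [hξ, self_mem_nhdsWithin] with r hr hru
    have hnorm : ‖ξ - v r‖ ≠ 0 := by
      rw [norm_ne_zero_iff, sub_ne_zero]
      exact fun h => hr (by rw [h, hv_zero])
    have hpos : 0 < |r + u| := abs_pos.2 fun h => hru (eq_neg_of_add_eq_zero_left h)
    have hk_mul : k r * velocityIntegrand C u c ν₀ χ 0 ξ (v r) = (χ |r + u|)⁻¹ := by
      simp only [k, velocityIntegrand, alphaTilde_zero_left, hv_zero, neg_mul, Real.exp_neg]
      field_simp
    rw [hk_mul, sub_neg_eq_add, norm_inv, Real.norm_eq_abs,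
      Real.norm_of_nonneg (inv_nonneg.2 (hχ.nonneg hpos.le)), ← div_eq_mul_inv,
      inv_le_iff_one_le_mul₀ hpos, div_mul_eq_mul_div, one_le_div (hχ.apply_pos hpos)]
    exact hχ.le_mul hpos.le
  simpa only [one_mul] using hinv.trans (hk.mul (isBigO_refl _ _))

lemma not_integrable_velocityIntegrand_zero (hχ : IsTruncation L χ) (C u c ν₀ : ℝ)
    (ξ : EuclideanSpace ℝ (Fin 3)) : ¬ Integrable (velocityIntegrand C u c ν₀ χ 0 ξ) := by
  intro h
  obtain ⟨z, hz⟩ := (ae_integrable_euclideanSpace_insertNth h 0).exists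
  exact not_intervalIntegrable_of_sub_inv_isBigO_punctured
    (inv_isBigO_velocityIntegrand hχ C u c ν₀ ξ z) (lt_add_one (-u)).ne Set.left_mem_uIcc
    hz.intervalIntegrable

end VelocityIntegral

section TimeIntegral

/-- The constant in front of `√T / α(x,ξ)` in the small-time estimate, for `κ = cν₀` and a
truncation of factor `L`. -/
def smallTimeConst (C κ L : ℝ) : ℝ :=
  L ^ 2 * (2 * √(Real.pi / C) + 4) ^ 3 * (1 + 4 * √(2 * (1 + κ) / κ))

lemma smallTimeConst_pos (C κ : ℝ) {L : ℝ} (hL : 0 < L) : 0 < smallTimeConst C κ L := by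
  unfold smallTimeConst
  positivity

variable {C u c ν₀ L T x : ℝ} {χ : ℝ → ℝ} {ξ : EuclideanSpace ℝ (Fin 3)}

lemma integral_velocityIntegrand_characteristic_le {τ : ℝ} (hC : 0 < C) (hκ : 0 < c * ν₀)
    (hχ : IsTruncation L χ) (hT : T ≤ 1) (hx : 0 ≤ x) (hxT : 0 ≤ x - T * (ξ 0 + u))
    (hα : 0 < alphaTilde u c ν₀ x ξ) (hτ : 0 < τ) (hτT : τ < T) :
    ∫ ξ', velocityIntegrand C u c ν₀ χ (x - τ * (ξ 0 + u)) ξ ξ' ≤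
      L ^ 2 * (2 * √(Real.pi / C) + 4) ^ 3 / χ (alphaTilde u c ν₀ x ξ) *
        (1 + √(2 * (1 + c * ν₀) / (c * ν₀)) * ((√τ)⁻¹ + (√(T - τ))⁻¹)) := by
  set y := x - τ * (ξ 0 + u)
  set κ := c * ν₀
  set D := 2 * (1 + κ) / κ
  set α := alphaTilde u c ν₀ x ξ
  have hL := hχ.pos
  have hθ : 0 < min τ (T - τ) := lt_min hτ (sub_pos.2 hτT)
  have hθα : min τ (T - τ) * α ≤ D * (κ * y) := by
    have hDκ : D * (κ * y) = 2 * (1 + κ) * y := by simp only [D]; field_simp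
    rw [hDκ]
    exact min_mul_alphaTilde_le hκ.le hx hT hτ.le hτT.le hxT
  have hκy : 0 < κ * y := by
    have hD : 0 < D := by positivity
    exact pos_of_mul_pos_right ((mul_pos hθ hα).trans_le hθα) hD.le
  have hinv : (√(min τ (T - τ)))⁻¹ ≤ (√τ)⁻¹ + (√(T - τ))⁻¹ := by
    rcases min_choice τ (T - τ) with h | h <;> rw [h]
    exacts [le_add_of_nonneg_right (by positivity), le_add_of_nonneg_left (by positivity)]
  have hχα := hχ.apply_pos hα
  calc ∫ ξ', velocityIntegrand C u c ν₀ χ y ξ ξ'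
      ≤ (2 * √(Real.pi / C) + 4) ^ 3 * (L * (1 + (√(κ * y))⁻¹)) :=
        integral_velocityIntegrand_le hC hχ hκy ξ
    _ ≤ (2 * √(Real.pi / C) + 4) ^ 3 *
          (L * (L * (1 + √D * (√(min τ (T - τ)))⁻¹) / χ α)) := by
        gcongr
        exact hχ.one_add_inv_sqrt_le hα hθ hκy hθα
    _ = L ^ 2 * (2 * √(Real.pi / C) + 4) ^ 3 / χ α * (1 + √D * (√(min τ (T - τ)))⁻¹) := by ring
    _ ≤ _ := by gcongr

lemma setIntegral_one_add_inv_sqrt_endpoints_le {a b D : ℝ} (hab : a ≤ b) (hba : b - a ≤ 1) :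
    ∫ s in Set.Ioo a b, (1 + √D * ((√(b - s))⁻¹ + (√(s - a))⁻¹)) ≤
      (1 + 4 * √D) * √(b - a) := by
  have hsqrt : b - a ≤ √(b - a) := Real.le_sqrt_of_sq_le (by nlinarith)
  rw [integral_add (integrable_const _) ((integrableOn_inv_sqrt_endpoints hab).const_mul _),
    integral_const_mul, setIntegral_inv_sqrt_endpoints hab, setIntegral_const,
    Real.volume_real_Ioo_of_le hab, smul_eq_mul, mul_one]
  linarith

lemma setIntegral_velocityIntegrand_le {lam t : ℝ} (hC : 0 < C) (hκ : 0 < c * ν₀)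
    (hχ : IsTruncation L χ) (hlam : 0 ≤ lam) (hT₀ : 0 ≤ T) (hT : T ≤ 1) (hx : 0 ≤ x)
    (hxT : 0 ≤ x - T * (ξ 0 + u)) (hα : 0 < alphaTilde u c ν₀ x ξ) :
    ∫ s in Set.Icc (t - T) t, Real.exp (-lam * (t - s) / 2) *
        ∫ ξ', velocityIntegrand C u c ν₀ χ (x - (t - s) * (ξ 0 + u)) ξ ξ' ≤
      smallTimeConst C (c * ν₀) L * √T / χ (alphaTilde u c ν₀ x ξ) := by
  set A := L ^ 2 * (2 * √(Real.pi / C) + 4) ^ 3 / χ (alphaTilde u c ν₀ x ξ) with hA_def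
  set D := 2 * (1 + c * ν₀) / (c * ν₀)
  have hA : 0 ≤ A := by
    have := hχ.apply_pos hα
    positivity
  have htT : t - T ≤ t := sub_le_self t hT₀
  have hvel (y : ℝ) : 0 ≤ ∫ ξ', velocityIntegrand C u c ν₀ χ y ξ ξ' :=
    integral_nonneg (velocityIntegrand_nonneg hχ C u c ν₀ y ξ)
  rw [integral_Icc_eq_integral_Ioo]
  calc ∫ s in Set.Ioo (t - T) t, Real.exp (-lam * (t - s) / 2) *
        ∫ ξ', velocityIntegrand C u c ν₀ χ (x - (t - s) * (ξ 0 + u)) ξ ξ'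
      ≤ ∫ s in Set.Ioo (t - T) t, A * (1 + √D * ((√(t - s))⁻¹ + (√(s - (t - T)))⁻¹)) := by
        refine integral_mono_of_nonneg
          (.of_forall fun s => mul_nonneg (Real.exp_pos _).le (hvel _))
          (((integrable_const _).add
            ((integrableOn_inv_sqrt_endpoints htT).const_mul _)).const_mul _)
          ((ae_restrict_mem measurableSet_Ioo).mono fun s hs => ?_)
        have hτ : 0 < t - s := sub_pos.2 hs.2
        have hexp : Real.exp (-lam * (t - s) / 2) ≤ 1 :=
          Real.exp_le_one_iff.2 (by nlinarith [mul_nonneg hlam hτ.le])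
        refine (mul_le_of_le_one_left (hvel _) hexp).trans ?_
        simp only [show s - (t - T) = T - (t - s) by ring]
        exact integral_velocityIntegrand_characteristic_le hC hκ hχ hT hx hxT hα hτ
          (by linarith [hs.1])
    _ ≤ A * ((1 + 4 * √D) * √T) := by
        rw [integral_const_mul]
        gcongr
        simpa using setIntegral_one_add_inv_sqrt_endpoints_le (D := D) htT (by simpa using hT)
    _ = smallTimeConst C (c * ν₀) L * √T / χ (alphaTilde u c ν₀ x ξ) := by
        rw [hA_def, smallTimeConst]
        ring

end TimeIntegral

theorem nln_small_time_general {C u c ν₀ lam t T x : ℝ} {χ : ℝ → ℝ}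
    {ξ : EuclideanSpace ℝ (Fin 3)} (hC : 0 < C) (hκ : 0 < c * ν₀)
    (hmono : MonotoneOn χ (Set.Ici 0)) (hid : ∀ s : ℝ, 0 ≤ s → s ≤ 1 / 2 → χ s = s)
    (hone : ∀ s : ℝ, 2 ≤ s → χ s = 1) (hlam : 0 ≤ lam) (hT₀ : 0 ≤ T) (hT : T ≤ 1) (hx : 0 ≤ x)
    (hxT : 0 ≤ x - T * (ξ 0 + u)) :
    ∫ s in Set.Icc (t - T) t, Real.exp (-lam * (t - s) / 2) *
        ∫ ξ', velocityIntegrand C u c ν₀ χ (x - (t - s) * (ξ 0 + u)) ξ ξ' ≤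
      smallTimeConst C (c * ν₀) 2 * √T / χ (alphaTilde u c ν₀ x ξ) := by
  have hχ := IsTruncation.of_monotoneOn hmono hid hone
  rcases (alphaTilde_nonneg u c ν₀ x ξ).eq_or_lt' with hα | hα
  · obtain ⟨hw, rfl⟩ := (alphaTilde_eq_zero_iff hκ.ne').1 hα
    simp [hα, hw, hχ.apply_zero,
      integral_undef (not_integrable_velocityIntegrand_zero hχ C u c ν₀ ξ)]
  · exact setIntegral_velocityIntegrand_le hC hκ hχ hlam hT₀ hT hx hxT hα

/-- small-time part of Lemma NLN, with `c = 1/8`: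
for every `C > 0` there are `C' > 0` and `t₀ ≥ 1` such that for all `t ≥ t₀`,
`0 < T ≤ 1`, `x ≥ 0` and `ξ` with `x − T(ξ₁+u) ≥ 0`,
`∫_{t−T}^t e^{−ν(ξ)(t−s)/2} ∫ e^{−C|ξ−ξ'|²}/|ξ−ξ'| · α(x−(t−s)(ξ₁+u),ξ')⁻¹ dξ' ds
  ≤ C'(√T + T ln t) / α(x,ξ)`. -/
theorem nln_small_time (ν₀ u : ℝ) (hν₀ : 0 < ν₀) (hu : |u| ≤ 1/2)
    (χ χ' : ℝ → ℝ)
    (hderiv : ∀ s ≥ (0:ℝ), HasDerivAt χ (χ' s) s)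
    (hcont : ContinuousOn χ' (Set.Ici (0:ℝ)))
    (hmono : ∀ s ≥ (0:ℝ), 0 ≤ χ' s)
    (hid : ∀ s : ℝ, 0 ≤ s → s ≤ 1/2 → χ s = s)
    (hone : ∀ s : ℝ, 2 ≤ s → χ s = 1)
    (hbound : ∀ s ≥ (0:ℝ), |χ' s| ≤ 1)
    (ν : EuclideanSpace ℝ (Fin 3) → ℝ) (hνmeas : Measurable ν)
    (hνlb : ∀ ξ, ν₀ * (1 + ‖ξ‖) ≤ ν ξ) :
    ∀ C > (0:ℝ), ∃ C' > (0:ℝ), ∃ t₀ ≥ (1:ℝ), ∀ t ≥ t₀, ∀ T : ℝ, 0 < T → T ≤ 1 →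
      ∀ x ≥ (0:ℝ), ∀ ξ : EuclideanSpace ℝ (Fin 3), 0 ≤ x - T * (ξ 0 + u) →
        (∫ s in Set.Icc (t - T) t, Real.exp (-ν ξ * (t - s) / 2) *
            ∫ ξ' : EuclideanSpace ℝ (Fin 3),
              Real.exp (-C * ‖ξ - ξ'‖ ^ 2) / ‖ξ - ξ'‖ *
                (χ (alphaTilde u (1/8) ν₀ (x - (t - s) * (ξ 0 + u)) ξ'))⁻¹) ≤
          C' * (Real.sqrt T + T * Real.log t) / χ (alphaTilde u (1/8) ν₀ x ξ) := by
  intro C hC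
  have hχ_mono : MonotoneOn χ (Set.Ici 0) := monotoneOn_of_hasDerivWithinAt_nonneg (convex_Ici 0)
    (fun s hs => (hderiv s hs).continuousAt.continuousWithinAt)
    (fun s hs => (hderiv s (interior_subset hs)).hasDerivWithinAt)
    (fun s hs => hmono s (interior_subset hs))
  have hconst : 0 < smallTimeConst C (1/8 * ν₀) 2 := smallTimeConst_pos C _ two_pos
  refine ⟨_, hconst, 1, le_rfl, fun t ht T hT₀ hT x hx ξ hxT => ?_⟩
  have hν : 0 ≤ ν ξ := le_trans (by positivity) (hνlb ξ)
  have hχα := (IsTruncation.of_monotoneOn hχ_mono hid hone).nonneg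
    (alphaTilde_nonneg u (1/8) ν₀ x ξ)
  refine (nln_small_time_general hC (by positivity) hχ_mono hid hone hν hT₀.le hT hx hxT).trans ?_
  gcongr
  exact le_add_of_nonneg_right (mul_nonneg hT₀.le (Real.log_nonneg ht))
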